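/- arXiv:1608.00518 — 2 statements merged into one kernel-verified Lean document; each statement's English description precedes it below -/
import Mathlib

section
/- Fix a set α, a natural number n, and an assignment U of an ultrafilter U(s) on α to every finite sequence s of elements of α. Let S be a U-tree of height n and let c be a function assigning to every length-n finite sequence of elements of α one of two colors. Then there exist a U-tree S' of height n with S' ⊆ S and a color i such that c(s) = i for every member s of S' of length n. -/
/-- `S` is a `U`-tree of height `n`: every member has length at most `n`, `S` contains
the empty sequence and is closed under initial segments, and for every `s ∈ S` of
length strictly less than `n` the set of one-point extensions of `s` lying in `S` is
`U s`-large. -/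
def IsUTree {α : Type*} (U : List α → Ultrafilter α) (n : ℕ) (S : Set (List α)) : Prop :=
  (∀ s ∈ S, s.length ≤ n) ∧
  ([] ∈ S) ∧
  (∀ s ∈ S, ∀ t : List α, t <+: s → t ∈ S) ∧
  (∀ s ∈ S, s.length < n → {a : α | s ++ [a] ∈ S} ∈ U s)

/-- For any 2-coloring of the length-`n` sequences there is a `U`-subtree of height `n`
all of whose maximal members get the same color. -/
theorem exists_homogeneous_subtree
    {α : Type*} (n : ℕ) (U : List α → Ultrafilter α)
    (S : Set (List α)) (hS : IsUTree U n S) (c : List α → Bool) :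
    ∃ S' : Set (List α), ∃ i : Bool,
      IsUTree U n S' ∧ S' ⊆ S ∧ ∀ s ∈ S', s.length = n → c s = i := by
  induction n generalizing S c with
  | zero =>
    refine ⟨S, c [], hS, subset_rfl, fun s _ hl => ?_⟩
    rw [List.length_eq_zero_iff.mp hl]
  | succ n ih =>
    classical
    obtain ⟨h1, h2, h3, h4⟩ := hS
    have hR : IsUTree U n {s | s ∈ S ∧ s.length ≤ n} := by
      refine ⟨fun s hs => hs.2, ⟨h2, by simp⟩,
        fun s hs t ht => ⟨h3 s hs.1 t ht, ht.length_le.trans hs.2⟩, fun s hs hl => ?_⟩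
      filter_upwards [h4 s hs.1 (by omega)] with a ha
      exact ⟨ha, by simp; omega⟩
    obtain ⟨T, i, ⟨t1, t2, t3, t4⟩, hTS, hc⟩ :=
      ih _ hR (fun s => decide ({a | c (s ++ [a]) = true} ∈ U s))
    refine ⟨T ∪ {u | ∃ s a, u = s ++ [a] ∧ s ∈ T ∧ s.length = n ∧ s ++ [a] ∈ S ∧
      c (s ++ [a]) = i}, i, ⟨?_, Or.inl t2, ?_, ?_⟩, ?_, ?_⟩
    · rintro s (hs | ⟨s, a, rfl, hs, hl, -⟩)
      · exact (t1 s hs).trans (Nat.le_succ n)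
      · simp [hl]
    · rintro s (hs | ⟨s, a, rfl, hs, hl, hm⟩) t ht
      · exact Or.inl (t3 s hs t ht)
      · rcases List.prefix_concat_iff.mp ht with rfl | ht
        · exact Or.inr ⟨s, a, rfl, hs, hl, hm⟩
        · exact Or.inl (t3 s hs t ht)
    · rintro s (hs | ⟨s, a, rfl, hs, hl, hm⟩) hlt
      · by_cases hl : s.length < n
        · filter_upwards [t4 s hs hl] with a ha
          exact Or.inl ha
        · have hl' : s.length = n := by omega
          have hci : {a | c (s ++ [a]) = i} ∈ U s := by
            have h := hc s hs hl'
            cases i with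
            | true => simpa using h
            | false =>
              have h' : {a | c (s ++ [a]) = true} ∉ U s := by simpa using h
              have h'' := Ultrafilter.compl_mem_iff_notMem.mpr h'
              filter_upwards [h''] with a ha
              simpa using ha
          filter_upwards [hci, h4 s (hTS hs).1 hlt] with a ha hb
          exact Or.inr ⟨s, a, rfl, hs, hl', hb, ha⟩
      · simp [hl] at hlt
    · rintro s (hs | ⟨s, a, rfl, hs, hl, hm, -⟩)
      · exact (hTS hs).1
      · exact hm
    · rintro s (hs | ⟨s, a, rfl, hs, hl, hm, h⟩) hlen
      · have := t1 s hs
        omega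
      · exact h
end

section
/- Fix a set α, a natural number n, an index set I, and an assignment U of an ultrafilter U(s) on α to every finite sequence s of elements of α, such that every U(s) is I-indecomposable. Let S be a U-tree of height n and let m be a function from finite sequences of elements of α to I. Then there exist a U-tree S' of height n with S' ⊆ S and values i_0, …, i_{n-1} ∈ I such that m(s) = i_k for every s ∈ S' of length k < n; in particular m takes at most n values on the members of S' of length less than n. -/
/-- Iterated limit label: `limLabel U c j s` is the eventual label `j` steps above `s`. -/
def limLabel {α I : Type*} (m : List α → I) (c : List α → (α → I) → I) : ℕ → List α → I
  | 0, s => m s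
  | j + 1, s => c s (fun a => limLabel m c j (s ++ [a]))

/-- If each ultrafilter `U s` is `I`-indecomposable, then any labelling
`m : List α → I` can be made constant on each level of a `U`-subtree of height `n`:
there are values `i_0, …, i_{n-1} ∈ I` with `m s = i_k` for every member `s` of the
subtree of length `k < n`. -/
theorem exists_levelwise_constant_subtree
    {α I : Type*} (n : ℕ) (U : List α → Ultrafilter α)
    (hU : ∀ s : List α, ∀ f : α → I, ∃ i : I, f ⁻¹' {i} ∈ U s)
    (S : Set (List α)) (hS : IsUTree U n S) (m : List α → I) :
    ∃ S' : Set (List α), ∃ g : Fin n → I,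
      IsUTree U n S' ∧ S' ⊆ S ∧
      ∀ s ∈ S', ∀ h : s.length < n, m s = g ⟨s.length, h⟩ := by
  choose c hc using hU
  obtain ⟨h1, h2, h3, h4⟩ := hS
  let v := limLabel m c
  refine ⟨{s | s ∈ S ∧ ∀ t, t <+: s → ∀ j, t.length + j < n → v j t = v (t.length + j) []},
    fun k => v k [], ⟨fun s hs => h1 s hs.1, ⟨h2, ?_⟩, ?_, ?_⟩, fun s hs => hs.1, ?_⟩
  · intro t ht j _
    rw [List.prefix_nil] at ht
    subst ht
    simp
  · rintro s ⟨hs, hv⟩ t ht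
    exact ⟨h3 s hs t ht, fun r hr => hv r (hr.trans ht)⟩
  · rintro s ⟨hs, hv⟩ hl
    have key : ∀ j, {a : α | v j (s ++ [a]) = v (j + 1) s} ∈ U s :=
      fun j => hc s (fun a => v j (s ++ [a]))
    have key2 : (⋂ j ∈ Set.Iio n, {a : α | v j (s ++ [a]) = v (j + 1) s}) ∈ (U s : Filter α) :=
      (Filter.biInter_mem (Set.finite_Iio n)).2 fun j _ => key j
    refine Filter.mem_of_superset (Filter.inter_mem (h4 s hs hl) key2) ?_
    rintro a ⟨ha, hb⟩
    refine ⟨ha, fun t ht j hj => ?_⟩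
    rw [List.prefix_concat_iff] at ht
    rcases ht with rfl | ht
    · simp only [Set.mem_iInter] at hb
      have e := hb j (by simp only [Set.mem_Iio]; omega)
      simp only [List.length_append, List.length_singleton] at hj ⊢
      rw [Set.mem_setOf_eq] at e
      rw [e, hv s (List.prefix_refl s) (j + 1) (by omega)]
      congr 1
      omega
    · exact hv t ht j hj
  · rintro s ⟨hs, hv⟩ h
    exact hv s (List.prefix_refl s) 0 (by simpa using h)
end
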